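/- Let U be a closed subspace of L²(Ω̄) and Λ a closed subspace of L²(Ω_I), and define b(v,λ) = ∫_{Ω_I} v(x)·λ(x) dx for v ∈ U and λ ∈ Λ. Suppose there is a constant β > 0 such that every λ ∈ Λ admits an extension λ̃ ∈ U with λ̃|_{Ω_I} = λ and β·‖λ̃‖_{L²(Ω̄)} ≤ ‖λ‖_{L²(Ω_I)}. Then the inf-sup condition β ≤ inf_{λ∈Λ, λ≠0} sup_{v∈U, v≠0} |b(v,λ)| / (‖v‖_{L²(Ω̄)}·‖λ‖_{L²(Ω_I)}) holds. -/

import Mathlib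

open MeasureTheory

/-!
Testing with `v = λ̃` gives `b(λ̃, λ) = ‖λ‖²`, whose quotient by `‖λ̃‖ ‖λ‖` is `‖λ‖ / ‖λ̃‖ ≥ β`.
A real supremum takes the junk value `0` when it is infinite, so the quotients must also be bounded
above; this follows from Cauchy–Schwarz, because `b(v, λ) = ⟪λ, R v⟫` for the bounded restriction
operator `R : L²(Ω̄) → L²(Ω_I)`.
-/

open scoped ENNReal InnerProductSpace

section InnerProductSpace

variable {E F : Type*} [NormedAddCommGroup E] [NormedSpace ℝ E]
  [NormedAddCommGroup F] [InnerProductSpace ℝ F]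

theorem abs_inner_map_div_le_opNorm (T : E →L[ℝ] F) (v : E) (l : F) :
    |⟪l, T v⟫_ℝ| / (‖v‖ * ‖l‖) ≤ ‖T‖ := by
  refine div_le_of_le_mul₀ (by positivity) (norm_nonneg T) ?_
  calc |⟪l, T v⟫_ℝ| ≤ ‖l‖ * ‖T v‖ := abs_real_inner_le_norm l (T v)
    _ ≤ ‖l‖ * (‖T‖ * ‖v‖) := by gcongr; exact T.le_opNorm v
    _ = ‖T‖ * (‖v‖ * ‖l‖) := by ring

theorem le_iSup_abs_inner_map_div {T : E →L[ℝ] F} {U : Set E} {w : E} {β : ℝ} (hwU : w ∈ U)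
    (hTw : T w ≠ 0) (hβ : β * ‖w‖ ≤ ‖T w‖) :
    β ≤ ⨆ v : {v : E // v ∈ U ∧ v ≠ 0}, |⟪T w, T v⟫_ℝ| / (‖(v : E)‖ * ‖T w‖) := by
  have hw : w ≠ 0 := fun h => hTw (by rw [h, map_zero])
  have hbdd : BddAbove (Set.range fun v : {v : E // v ∈ U ∧ v ≠ 0} =>
      |⟪T w, T v⟫_ℝ| / (‖(v : E)‖ * ‖T w‖)) :=
    ⟨‖T‖, Set.forall_mem_range.2 fun v => abs_inner_map_div_le_opNorm T v (T w)⟩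
  calc β ≤ ‖T w‖ / ‖w‖ := (le_div_iff₀ (norm_pos_iff.2 hw)).2 hβ
    _ = |⟪T w, T w⟫_ℝ| / (‖w‖ * ‖T w‖) := by
      rw [real_inner_self_eq_norm_mul_norm, abs_mul_self,
        mul_div_mul_right _ _ (norm_ne_zero_iff.2 hTw)]
    _ ≤ _ := le_ciSup hbdd ⟨w, hwU, hw⟩

end InnerProductSpace

section L2

variable {α G : Type*} [MeasurableSpace α] [NormedAddCommGroup G] [InnerProductSpace ℝ G]
  {μ ν : Measure α} {c : ℝ≥0∞}

theorem inner_LpToLpOfMeasureLeSMul (hc : c ≠ ∞) (hνμ : ν ≤ c • μ) (l : Lp G 2 ν) (v : Lp G 2 μ) :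
    ⟪l, Lp.LpToLpOfMeasureLeSMul hc hνμ v⟫_ℝ = ∫ x, ⟪l x, v x⟫_ℝ ∂ν := by
  rw [L2.inner_def]
  refine integral_congr_ae ?_
  filter_upwards [Lp.coeFn_LpToLpOfMeasureLeSMul hc hνμ v] with x hx
  rw [hx]

theorem stmt7_general (hc : c ≠ ∞) (hνμ : ν ≤ c • μ) (U : Set (Lp G 2 μ)) (Λ : Set (Lp G 2 ν))
    (β : ℝ) (hext : ∀ l ∈ Λ, ∃ lt ∈ U, (∀ᵐ x ∂ν, lt x = l x) ∧ β * ‖lt‖ ≤ ‖l‖) :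
    ∀ l ∈ Λ, l ≠ 0 →
      β ≤ ⨆ v : {v : Lp G 2 μ // v ∈ U ∧ v ≠ 0},
        |∫ x, ⟪l x, (v : Lp G 2 μ) x⟫_ℝ ∂ν| / (‖(v : Lp G 2 μ)‖ * ‖l‖) := by
  intro l hl hl0
  obtain ⟨lt, hltU, hlt, hnorm⟩ := hext l hl
  have hrestrict : Lp.LpToLpOfMeasureLeSMul hc hνμ lt = l :=
    Lp.ext ((Lp.coeFn_LpToLpOfMeasureLeSMul hc hνμ lt).trans hlt)
  subst hrestrict
  simp only [← inner_LpToLpOfMeasureLeSMul hc hνμ]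
  exact le_iSup_abs_inner_map_div hltU hl0 hnorm

end L2

theorem stmt7 {n : ℕ} (Ω ΩI : Set (EuclideanSpace ℝ (Fin n)))
    (hΩmeas : MeasurableSet Ω) (hΩImeas : MeasurableSet ΩI)
    (hdisj : Disjoint Ω ΩI)
    (hΩbdd : Bornology.IsBounded Ω) (hΩIbdd : Bornology.IsBounded ΩI)
    (hΩpos : 0 < volume Ω) (hΩIpos : 0 < volume ΩI)
    (U : Submodule ℝ (Lp ℝ 2 (volume.restrict (Ω ∪ ΩI))))
    (hUclosed : IsClosed (U : Set (Lp ℝ 2 (volume.restrict (Ω ∪ ΩI)))))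
    (Λ : Submodule ℝ (Lp ℝ 2 (volume.restrict ΩI)))
    (hΛclosed : IsClosed (Λ : Set (Lp ℝ 2 (volume.restrict ΩI))))
    (β : ℝ) (hβ : 0 < β)
    -- every λ ∈ Λ admits an extension λ̃ ∈ U with λ̃|_{Ω_I} = λ and β‖λ̃‖ ≤ ‖λ‖
    (hext : ∀ l ∈ Λ, ∃ lt ∈ U,
      (∀ᵐ x ∂(volume.restrict ΩI), lt x = l x) ∧ β * ‖lt‖ ≤ ‖l‖) :
    -- the inf-sup condition: for every nonzero λ ∈ Λ,
    -- β ≤ sup_{0 ≠ v ∈ U} |b(v,λ)| / (‖v‖ ‖λ‖)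
    ∀ l ∈ Λ, l ≠ 0 →
      β ≤ ⨆ v : {v : Lp ℝ 2 (volume.restrict (Ω ∪ ΩI)) // v ∈ U ∧ v ≠ 0},
        |∫ x in ΩI, (v : Lp ℝ 2 (volume.restrict (Ω ∪ ΩI))) x * l x| /
          (‖(v : Lp ℝ 2 (volume.restrict (Ω ∪ ΩI)))‖ * ‖l‖) := by
  have hle : volume.restrict ΩI ≤ (1 : ℝ≥0∞) • volume.restrict (Ω ∪ ΩI) := by
    simpa only [one_smul] using Measure.restrict_mono_set volume Set.subset_union_right
  -- On `ℝ`, `⟪a, b⟫_ℝ` unfolds to `b * a`.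
  exact stmt7_general ENNReal.one_ne_top hle (U : Set (Lp ℝ 2 _)) (Λ : Set (Lp ℝ 2 _)) β hext
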